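/- Let Δ ∈ ℂ³ satisfy ψ₁(Δ) ≠ 0 and ψ₂(Δ) ≠ 0, let η,η' : ℝ → ℂ be functions, and set Δ(t) := S[η(t),η'(t)]·Δ. Then the family {Δ(t)} has a single tracing orbit in ascending order — i.e., J·Δ(t) = Δ(t + 1/3) for all t ∈ ℝ — if and only if η(t + 1/3) = η(t)·ω⁻¹ and η'(t + 1/3) = η'(t)·ω for all t ∈ ℝ. -/

import Mathlib

noncomputable def ω : ℂ := Complex.exp (2 * Real.pi * Complex.I / 3)

def J : Matrix (Fin 3) (Fin 3) ℂ := !![0,1,0; 0,0,1; 1,0,0]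

noncomputable def W : Matrix (Fin 3) (Fin 3) ℂ := !![1,1,1; 1,ω,ω^2; 1,ω^2,ω]

/-- generalized cevian operator `S[η,η'] = W ⬝ diag(1,η',η) ⬝ W⁻¹` -/
noncomputable def S (η η' : ℂ) : Matrix (Fin 3) (Fin 3) ℂ :=
  W * Matrix.diagonal ![1, η', η] * W⁻¹

/-- `ω^k` for `k : ZMod 3` (well defined since `ω^3 = 1`). -/
noncomputable def ωz (k : ZMod 3) : ℂ := ω ^ k.val

/-- `J^k` for `k : ZMod 3` (well defined since `J^3 = 1`). -/
def Jz (k : ZMod 3) : Matrix (Fin 3) (Fin 3) ℂ := J ^ k.val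

/-- generalized median operator `M^{wx/yz}[η,η']` -/
noncomputable def M (η η' : ℂ) (w x y z : ZMod 3) : Matrix (Fin 3) (Fin 3) ℂ :=
  S ((η * ωz (-x) - ωz (-w)) / (ωz (-z) - ωz (-y)))
    ((η' * ωz x - ωz w) / (ωz z - ωz y))

noncomputable def ψ₀ (Δ : Fin 3 → ℂ) : ℂ := (Δ 0 + Δ 1 + Δ 2) / 3
noncomputable def ψ₁ (Δ : Fin 3 → ℂ) : ℂ := (Δ 0 + Δ 1 * ω^2 + Δ 2 * ω) / 3
noncomputable def ψ₂ (Δ : Fin 3 → ℂ) : ℂ := (Δ 0 + Δ 1 * ω + Δ 2 * ω^2) / 3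
noncomputable def ψ (Δ : Fin 3 → ℂ) : ℂ := ψ₂ Δ / ψ₁ Δ

/-! The Fourier basis (the columns of `W`) diagonalizes every `S[η,η']`, and the cyclic shift `J` is
itself such an operator, namely `S[ω⁻¹,ω]`. Hence `J S[η,η'] = S[ω⁻¹η,ωη']`, and an operator
`S[η,η']` is determined by its value at a single `Δ` as soon as `ψ₁ Δ` and `ψ₂ Δ` are nonzero. -/

open scoped Matrix

lemma isPrimitiveRoot_ω : IsPrimitiveRoot ω 3 :=
  Complex.isPrimitiveRoot_exp 3 three_ne_zero

lemma one_add_ω_add_ω_sq : 1 + ω + ω ^ 2 = 0 := by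
  simpa [Finset.sum_range_succ] using isPrimitiveRoot_ω.geom_sum_eq_zero (by norm_num)

lemma ω_inv : ω⁻¹ = ω ^ 2 :=
  inv_eq_of_mul_eq_one_right (by rw [← pow_succ', isPrimitiveRoot_ω.pow_eq_one])

lemma W_mulVec (x y z : ℂ) :
    W *ᵥ ![x, y, z] = ![x + y + z, x + ω * y + ω ^ 2 * z, x + ω ^ 2 * y + ω * z] := by
  ext i
  fin_cases i <;> simp [W, Matrix.mulVec, dotProduct, Fin.sum_univ_three]

lemma W_mulVec_fourier (Δ : Fin 3 → ℂ) : W *ᵥ ![ψ₀ Δ, ψ₁ Δ, ψ₂ Δ] = Δ := by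
  have hsum := one_add_ω_add_ω_sq
  have hcube := isPrimitiveRoot_ω.pow_eq_one
  have h₀ : ψ₀ Δ + ψ₁ Δ + ψ₂ Δ = Δ 0 := by
    simp only [ψ₀, ψ₁, ψ₂]
    linear_combination (Δ 1 + Δ 2) / 3 * hsum
  have h₁ : ψ₀ Δ + ω * ψ₁ Δ + ω ^ 2 * ψ₂ Δ = Δ 1 := by
    simp only [ψ₀, ψ₁, ψ₂]
    linear_combination (Δ 0 + Δ 2) / 3 * hsum + (2 * Δ 1 + Δ 2 * ω) / 3 * hcube
  have h₂ : ψ₀ Δ + ω ^ 2 * ψ₁ Δ + ω * ψ₂ Δ = Δ 2 := by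
    simp only [ψ₀, ψ₁, ψ₂]
    linear_combination (Δ 0 + Δ 1) / 3 * hsum + (2 * Δ 2 + Δ 1 * ω) / 3 * hcube
  rw [W_mulVec, h₀, h₁, h₂]
  exact FinVec.etaExpand_eq Δ

lemma isUnit_W : IsUnit W :=
  Matrix.mulVec_surjective_iff_isUnit.mp fun Δ => ⟨_, W_mulVec_fourier Δ⟩

lemma isUnit_det_W : IsUnit W.det :=
  W.isUnit_iff_isUnit_det.mp isUnit_W

lemma W_inv_mulVec (Δ : Fin 3 → ℂ) : W⁻¹ *ᵥ Δ = ![ψ₀ Δ, ψ₁ Δ, ψ₂ Δ] := by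
  apply Matrix.mulVec_injective_of_isUnit isUnit_W
  rw [Matrix.mulVec_mulVec, Matrix.mul_nonsing_inv _ isUnit_det_W, Matrix.one_mulVec,
    W_mulVec_fourier]

lemma S_mul_S (a a' b b' : ℂ) : S a a' * S b b' = S (a * b) (a' * b') := by
  have hdiag : Matrix.diagonal ![1, a', a] * Matrix.diagonal ![1, b', b] =
      Matrix.diagonal ![1, a' * b', a * b] := by
    rw [Matrix.diagonal_mul_diagonal]
    congr 1
    ext i
    fin_cases i <;> simp
  simp only [S, ← hdiag, Matrix.mul_assoc, Matrix.nonsing_inv_mul_cancel_left _ _ isUnit_det_W]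

lemma J_mul_W : J * W = W * Matrix.diagonal ![1, ω, ω⁻¹] := by
  have hcube : ω * (ω * ω) = 1 := by
    rw [← pow_two, ← pow_succ', isPrimitiveRoot_ω.pow_eq_one]
  ext i j
  rw [Matrix.mul_diagonal]
  fin_cases i <;> fin_cases j <;>
    simp [J, W, Matrix.mul_apply, Fin.sum_univ_three, ω_inv, pow_two, mul_assoc, hcube]

lemma J_eq_S : J = S ω⁻¹ ω := by
  rw [S, ← J_mul_W, Matrix.mul_nonsing_inv_cancel_right _ _ isUnit_det_W]

lemma S_mulVec (a a' : ℂ) (Δ : Fin 3 → ℂ) :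
    S a a' *ᵥ Δ = W *ᵥ ![ψ₀ Δ, a' * ψ₁ Δ, a * ψ₂ Δ] := by
  rw [S, ← Matrix.mulVec_mulVec, ← Matrix.mulVec_mulVec, W_inv_mulVec]
  congr 1
  ext i
  fin_cases i <;> simp [Matrix.mulVec_diagonal]

lemma S_mulVec_eq_iff {Δ : Fin 3 → ℂ} (h₁ : ψ₁ Δ ≠ 0) (h₂ : ψ₂ Δ ≠ 0) {a a' b b' : ℂ} :
    S a a' *ᵥ Δ = S b b' *ᵥ Δ ↔ a = b ∧ a' = b' := by
  rw [S_mulVec, S_mulVec, (Matrix.mulVec_injective_of_isUnit isUnit_W).eq_iff]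
  simp only [Matrix.vecCons_inj, true_and, mul_left_inj' h₁, mul_left_inj' h₂, and_comm]

lemma J_mulVec_S_mulVec (a a' : ℂ) (Δ : Fin 3 → ℂ) :
    J *ᵥ (S a a' *ᵥ Δ) = S (a * ω⁻¹) (a' * ω) *ᵥ Δ := by
  rw [Matrix.mulVec_mulVec, J_eq_S, S_mul_S, mul_comm ω⁻¹, mul_comm ω]

lemma J_mulVec_S_mulVec_eq_iff {Δ : Fin 3 → ℂ} (h₁ : ψ₁ Δ ≠ 0) (h₂ : ψ₂ Δ ≠ 0)
    {a a' b b' : ℂ} :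
    J *ᵥ (S a a' *ᵥ Δ) = S b b' *ᵥ Δ ↔ b = a * ω⁻¹ ∧ b' = a' * ω := by
  rw [J_mulVec_S_mulVec, eq_comm, S_mulVec_eq_iff h₁ h₂]

theorem single_tracing_orbit_ascending_iff (Δ : Fin 3 → ℂ)
    (h1 : ψ₁ Δ ≠ 0) (h2 : ψ₂ Δ ≠ 0) (η η' : ℝ → ℂ) :
    (∀ t : ℝ, J.mulVec ((S (η t) (η' t)).mulVec Δ) =
        (S (η (t + 1/3)) (η' (t + 1/3))).mulVec Δ)
    ↔ (∀ t : ℝ, η (t + 1/3) = η t * ω⁻¹ ∧ η' (t + 1/3) = η' t * ω) :=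
  forall_congr' fun _ => J_mulVec_S_mulVec_eq_iff h1 h2
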